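/- arXiv:1711.08173 — 2 statements merged into one kernel-verified Lean document; each statement's English description precedes it below -/
import Mathlib

section
/- Suppose e ∈ ℕ and a₁, …, a₆ ∈ ℕ satisfy aᵢ ≤ 4 for all i, 3e = 4 + (a₁ + ⋯ + a₆), and p(e, a) ≥ 0. Then 2 ≤ e ≤ 9, p(e, a) ∈ {0, 1}, and the pair (e, {a₁, …, a₆}) (where {a₁, …, a₆} is the multiset of the aᵢ) is one of the following nine pairs, with the indicated value of p: (2, {0,0,0,0,1,1}), p = 0; (3, {0,0,1,1,1,2}), p = 0; (3, {0,1,1,1,1,1}), p = 1; (4, {0,1,1,2,2,2}), p = 0; (4, {1,1,1,1,1,3}), p = 0; (4, {1,1,1,1,2,2}), p = 1; (5, {1,1,2,2,2,3}), p = 0; (5, {1,2,2,2,2,2}), p = 1; (6, {2,2,2,2,3,3}), p = 0. -/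
/-- The arithmetic genus `p(e, a) = (e-1)(e-2)/2 - Σᵢ aᵢ(aᵢ-1)/2` of a curve of class
`e·g*H - Σ aᵢEᵢ` on a smooth cubic surface presented as a blow-up of `ℙ²` in six points. -/
def paGenus (e : ℕ) (a : Fin 6 → ℕ) : ℤ :=
  ((e : ℤ) - 1) * ((e : ℤ) - 2) / 2 - ∑ i, (a i : ℤ) * ((a i : ℤ) - 1) / 2

/-!
The classes are translates of very small vectors. Put `c = ⌊(e - 1) / 2⌋` and `bᵢ = aᵢ - c`.
If `e = 2c + 1`, then `∑ bᵢ = -1` and `∑ bᵢ² = 2c(3 - c) - 1 - 2p`; if `e = 2c + 2`, then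
`∑ bᵢ = 2` and `∑ bᵢ² = 2c(2 - c) + 2 - 2p`. Integrality gives `|∑ bᵢ| ≤ ∑ bᵢ²`, which together
with `p ≥ 0` leaves finitely many pairs `(c, p)`, all of them with `∑ bᵢ² ≤ 4`. The vectors `b` can
then be read off from their sum and their sum of squares.
-/

open Multiset

/-- The arithmetic genus of the class `e·g*H - ∑ aᵢEᵢ` on the blow-up of `ℙ²` in `card s` points,
as a function of the multiset `s` of the multiplicities `aᵢ`, which may be negative. -/
def classGenus (e : ℤ) (s : Multiset ℤ) : ℤ :=
  (e - 1) * (e - 2) / 2 - (s.map fun x => x * (x - 1) / 2).sum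

theorem paGenus_eq_classGenus (e : ℕ) (a : Fin 6 → ℕ) :
    paGenus e a = classGenus e (Finset.univ.val.map fun i => (a i : ℤ)) := by
  simp only [paGenus, classGenus, map_map, Function.comp_def, Finset.sum_eq_multiset_sum]

theorem map_eq_iff_map_natCast_eq {ι : Type*} {s : Multiset ι} {f : ι → ℕ} {t : Multiset ℕ} :
    s.map f = t ↔ (s.map fun i => (f i : ℤ)) = t.map Nat.cast := by
  rw [← (map_injective (Nat.cast_injective (R := ℤ))).eq_iff, map_map, Function.comp_def]

theorem two_mul_classGenus (e : ℤ) (s : Multiset ℤ) :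
    2 * classGenus e s = (e - 1) * (e - 2) - (s.map fun x => x * (x - 1)).sum := by
  have hx (x : ℤ) : 2 * (x * (x - 1) / 2) = x * (x - 1) :=
    Int.mul_ediv_cancel' (Int.even_mul_pred_self x).two_dvd
  have he : 2 * ((e - 1) * (e - 2) / 2) = (e - 1) * (e - 2) := by
    simpa only [sub_sub, one_add_one_eq_two] using hx (e - 1)
  rw [classGenus, mul_sub 2, he, ← sum_map_mul_left]
  simp only [hx]

theorem two_mul_classGenus_translate (e c : ℤ) (t : Multiset ℤ) :
    2 * classGenus e (t.map (· + c)) =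
      (e - 1) * (e - 2) - (t.map (· ^ 2)).sum - (2 * c - 1) * t.sum - card t * (c * (c - 1)) := by
  have hx (x : ℤ) : (x + c) * (x + c - 1) = x ^ 2 + (2 * c - 1) * x + c * (c - 1) := by ring
  have hlin : (t.map fun x => (2 * c - 1) * x).sum = (2 * c - 1) * t.sum := by
    rw [sum_map_mul_left, map_id']
  simp only [two_mul_classGenus, map_map, Function.comp_def, hx, sum_map_add, hlin, map_const',
    sum_replicate, nsmul_eq_mul]
  ring

theorem abs_sum_le_sum_sq (t : Multiset ℤ) : |t.sum| ≤ (t.map (· ^ 2)).sum :=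
  calc |t.sum| ≤ (t.map abs).sum := abs_sum_le_sum_abs
    _ ≤ (t.map (· ^ 2)).sum := sum_map_le_sum_map _ _ fun x _ => by
      simpa only [sq_abs] using Int.le_self_sq |x|

theorem sum_count_nsmul_of_toFinset_subset {α : Type*} [DecidableEq α] {s : Multiset α}
    {T : Finset α} (h : s.toFinset ⊆ T) : ∑ x ∈ T, s.count x • {x} = s := by
  rw [← Finset.sum_subset h fun x _ hx => by
    rw [count_eq_zero_of_notMem (mt mem_toFinset.2 hx), zero_nsmul]]
  exact toFinset_sum_count_nsmul_eq s

theorem eq_replicate_count_of_sum_sq_lt_nine {t : Multiset ℤ} (h : (t.map (· ^ 2)).sum < 9) :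
    t = replicate (t.count 0) 0 + (replicate (t.count 1) 1 + (replicate (t.count (-1)) (-1) +
      (replicate (t.count 2) 2 + replicate (t.count (-2)) (-2)))) := by
  have hsub : t.toFinset ⊆ {0, 1, -1, 2, -2} := fun x hx => by
    have hx_sq : x ^ 2 < 3 ^ 2 := (single_le_sum (by simp [sq_nonneg]) _
      (mem_map_of_mem (· ^ 2) (mem_toFinset.1 hx))).trans_lt h
    obtain ⟨hlow, hupp⟩ := abs_lt_of_sq_lt_sq' hx_sq (by norm_num)
    simp only [Finset.mem_insert, Finset.mem_singleton]
    omega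
  conv_lhs => rw [← sum_count_nsmul_of_toFinset_subset hsub]
  simp [nsmul_singleton]

theorem exists_eq_replicate_of_sum_sq_lt_nine {t : Multiset ℤ} (h : (t.map (· ^ 2)).sum < 9) :
    ∃ u v w y z : ℕ,
      t = replicate u 0 +
        (replicate v 1 + (replicate w (-1) + (replicate y 2 + replicate z (-2)))) ∧
      card t = u + v + w + y + z ∧
      t.sum = v - w + 2 * y - 2 * z ∧
      (t.map (· ^ 2)).sum = (v + w + 4 * y + 4 * z : ℤ) := by
  have ht := eq_replicate_count_of_sum_sq_lt_nine h
  refine ⟨_, _, _, _, _, ht, (congrArg card ht).trans ?_, (congrArg sum ht).trans ?_,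
    (congrArg (fun s => (s.map (· ^ 2)).sum) ht).trans ?_⟩
  · simp only [card_add, card_replicate, add_assoc]
  · simp only [sum_add, sum_replicate, nsmul_eq_mul]
    ring
  · simp only [Multiset.map_add, map_replicate, sum_add, sum_replicate, nsmul_eq_mul]
    ring

section SmallOffsets

variable {t : Multiset ℤ} {m : ℕ}

theorem eq_of_sum_neg_one_of_sum_sq_one (hcard : card t = m + 1) (hsum : t.sum = -1)
    (hsq : (t.map (· ^ 2)).sum = 1) : t = replicate m 0 + {-1} := by
  obtain ⟨u, v, w, y, z, ht, hcard', hsum', hsq'⟩ :=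
    exists_eq_replicate_of_sum_sq_lt_nine (hsq.trans_lt (by norm_num))
  obtain ⟨rfl, rfl, rfl, rfl, rfl⟩ : u = m ∧ v = 0 ∧ w = 1 ∧ y = 0 ∧ z = 0 := by omega
  exact ht

theorem eq_of_sum_neg_one_of_sum_sq_three (hcard : card t = m + 3) (hsum : t.sum = -1)
    (hsq : (t.map (· ^ 2)).sum = 3) : t = replicate m 0 + {1, -1, -1} := by
  obtain ⟨u, v, w, y, z, ht, hcard', hsum', hsq'⟩ :=
    exists_eq_replicate_of_sum_sq_lt_nine (hsq.trans_lt (by norm_num))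
  obtain ⟨rfl, rfl, rfl, rfl, rfl⟩ : u = m ∧ v = 1 ∧ w = 2 ∧ y = 0 ∧ z = 0 := by omega
  exact ht

theorem eq_of_sum_two_of_sum_sq_two (hcard : card t = m + 2) (hsum : t.sum = 2)
    (hsq : (t.map (· ^ 2)).sum = 2) : t = replicate m 0 + {1, 1} := by
  obtain ⟨u, v, w, y, z, ht, hcard', hsum', hsq'⟩ :=
    exists_eq_replicate_of_sum_sq_lt_nine (hsq.trans_lt (by norm_num))
  obtain ⟨rfl, rfl, rfl, rfl, rfl⟩ : u = m ∧ v = 2 ∧ w = 0 ∧ y = 0 ∧ z = 0 := by omega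
  exact ht

theorem eq_or_eq_of_sum_two_of_sum_sq_four (hcard : card t = m + 4) (hsum : t.sum = 2)
    (hsq : (t.map (· ^ 2)).sum = 4) :
    t = replicate m 0 + {1, 1, 1, -1} ∨ t = replicate (m + 3) 0 + {2} := by
  obtain ⟨u, v, w, y, z, ht, hcard', hsum', hsq'⟩ :=
    exists_eq_replicate_of_sum_sq_lt_nine (hsq.trans_lt (by norm_num))
  obtain ⟨rfl, rfl, rfl, rfl, rfl⟩ | ⟨rfl, rfl, rfl, rfl, rfl⟩ :
      (u = m ∧ v = 3 ∧ w = 1 ∧ y = 0 ∧ z = 0) ∨ (u = m + 3 ∧ v = 0 ∧ w = 0 ∧ y = 1 ∧ z = 0) := by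
    omega
  · exact .inl ht
  · exact .inr ht

end SmallOffsets

section OffsetClassification

variable {c : ℤ} {t : Multiset ℤ}

theorem sum_sq_offset_of_odd (hcard : card t = 6) (hsum : t.sum = -1)
    (hp : 0 ≤ classGenus (2 * c + 1) (t.map (· + c))) :
    (c = 1 ∨ c = 2) ∧ ((t.map (· ^ 2)).sum = 3 ∨ (t.map (· ^ 2)).sum = 1) := by
  have hgenus := two_mul_classGenus_translate (2 * c + 1) c t
  have hsq := (neg_le_abs _).trans (abs_sum_le_sum_sq t)
  rw [hsum, hcard, Nat.cast_ofNat] at hgenus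
  rw [hsum, neg_neg] at hsq
  have hquad : 1 ≤ c * (3 - c) := by linarith
  obtain rfl | rfl : c = 1 ∨ c = 2 := by
    have hlow : 0 < c := by nlinarith
    have hupp : c < 3 := by nlinarith
    omega
  all_goals omega

theorem sum_sq_offset_of_even (hcard : card t = 6) (hsum : t.sum = 2)
    (hp : 0 ≤ classGenus (2 * c + 2) (t.map (· + c))) :
    (c = 0 ∨ c = 2) ∧ (t.map (· ^ 2)).sum = 2 ∨
      c = 1 ∧ ((t.map (· ^ 2)).sum = 4 ∨ (t.map (· ^ 2)).sum = 2) := by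
  have hgenus := two_mul_classGenus_translate (2 * c + 2) c t
  have hsq := (le_abs_self _).trans (abs_sum_le_sum_sq t)
  rw [hsum, hcard, Nat.cast_ofNat] at hgenus
  rw [hsum] at hsq
  have hquad : 0 ≤ c * (2 - c) := by linarith
  obtain rfl | rfl | rfl : c = 0 ∨ c = 1 ∨ c = 2 := by
    have hlow : 0 ≤ c := by nlinarith
    have hupp : c ≤ 2 := by nlinarith
    omega
  all_goals omega

theorem offset_classification_of_odd (hcard : card t = 6) (hsum : t.sum = -1)
    (hp : 0 ≤ classGenus (2 * c + 1) (t.map (· + c))) :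
    (c = 1 ∨ c = 2) ∧ (t = {0, 0, 0, 1, -1, -1} ∨ t = {0, 0, 0, 0, 0, -1}) := by
  obtain ⟨hc, hsq | hsq⟩ := sum_sq_offset_of_odd hcard hsum hp
  · exact ⟨hc, .inl (eq_of_sum_neg_one_of_sum_sq_three (m := 3) hcard hsum hsq)⟩
  · exact ⟨hc, .inr (eq_of_sum_neg_one_of_sum_sq_one (m := 5) hcard hsum hsq)⟩

theorem offset_classification_of_even (hcard : card t = 6) (hsum : t.sum = 2)
    (hp : 0 ≤ classGenus (2 * c + 2) (t.map (· + c))) :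
    (c = 0 ∨ c = 2) ∧ t = {0, 0, 0, 0, 1, 1} ∨
      c = 1 ∧ (t = {0, 0, 1, 1, 1, -1} ∨ t = {0, 0, 0, 0, 0, 2} ∨ t = {0, 0, 0, 0, 1, 1}) := by
  obtain ⟨hc, hsq⟩ | ⟨hc, hsq | hsq⟩ := sum_sq_offset_of_even hcard hsum hp
  · exact .inl ⟨hc, eq_of_sum_two_of_sum_sq_two (m := 4) hcard hsum hsq⟩
  · obtain ht | ht := eq_or_eq_of_sum_two_of_sum_sq_four (m := 2) hcard hsum hsq
    · exact .inr ⟨hc, .inl ht⟩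
    · exact .inr ⟨hc, .inr (.inl ht)⟩
  · exact .inr ⟨hc, .inr (.inr (eq_of_sum_two_of_sum_sq_two (m := 4) hcard hsum hsq))⟩

end OffsetClassification

theorem quartic_class_classification_general (e : ℤ) (s : Multiset ℤ) (hcard : card s = 6)
    (hsum : 3 * e = 4 + s.sum) (hp : 0 ≤ classGenus e s) :
    (e = 2 ∧ s = {0, 0, 0, 0, 1, 1} ∧ classGenus e s = 0) ∨
    (e = 3 ∧ s = {0, 0, 1, 1, 1, 2} ∧ classGenus e s = 0) ∨
    (e = 3 ∧ s = {0, 1, 1, 1, 1, 1} ∧ classGenus e s = 1) ∨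
    (e = 4 ∧ s = {0, 1, 1, 2, 2, 2} ∧ classGenus e s = 0) ∨
    (e = 4 ∧ s = {1, 1, 1, 1, 1, 3} ∧ classGenus e s = 0) ∨
    (e = 4 ∧ s = {1, 1, 1, 1, 2, 2} ∧ classGenus e s = 1) ∨
    (e = 5 ∧ s = {1, 1, 2, 2, 2, 3} ∧ classGenus e s = 0) ∨
    (e = 5 ∧ s = {1, 2, 2, 2, 2, 2} ∧ classGenus e s = 1) ∨
    (e = 6 ∧ s = {2, 2, 2, 2, 3, 3} ∧ classGenus e s = 0) := by
  obtain ⟨c, hc⟩ : ∃ c, e = 2 * c + 1 ∨ e = 2 * c + 2 := ⟨(e - 1) / 2, by omega⟩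
  obtain ⟨t, rfl⟩ : ∃ t, s = t.map (· + c) := ⟨s.map (· - c), by simp⟩
  rw [card_map] at hcard
  have hoffset : 3 * e = 4 + (t.sum + 6 * c) := by
    simpa only [sum_map_add, map_id', map_const', sum_replicate, hcard, nsmul_eq_mul,
      Nat.cast_ofNat] using hsum
  rcases hc with rfl | rfl
  · obtain ⟨rfl | rfl, rfl | rfl⟩ := offset_classification_of_odd hcard (by omega) hp <;> decide
  · obtain ⟨rfl | rfl, rfl⟩ | ⟨rfl, rfl | rfl | rfl⟩ :=
      offset_classification_of_even hcard (by omega) hp <;> decide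

/-- Classification (Lemma 4.5 of the paper): if `aᵢ ≤ 4`, `3e = 4 + Σ aᵢ` and
`p(e, a) ≥ 0`, then `2 ≤ e ≤ 9`, `p(e, a) ∈ {0, 1}`, and the pair
`(e, [a₁, …, a₆])` (with the `aᵢ` taken as a multiset) is one of nine explicit pairs. -/
theorem quartic_class_classification (e : ℕ) (a : Fin 6 → ℕ)
    (ha : ∀ i, a i ≤ 4)
    (hsum : 3 * e = 4 + ∑ i, a i)
    (hp : 0 ≤ paGenus e a) :
    (2 ≤ e ∧ e ≤ 9) ∧ (paGenus e a = 0 ∨ paGenus e a = 1) ∧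
    ((e = 2 ∧ Multiset.map a Finset.univ.val = {0,0,0,0,1,1} ∧ paGenus e a = 0) ∨
     (e = 3 ∧ Multiset.map a Finset.univ.val = {0,0,1,1,1,2} ∧ paGenus e a = 0) ∨
     (e = 3 ∧ Multiset.map a Finset.univ.val = {0,1,1,1,1,1} ∧ paGenus e a = 1) ∨
     (e = 4 ∧ Multiset.map a Finset.univ.val = {0,1,1,2,2,2} ∧ paGenus e a = 0) ∨
     (e = 4 ∧ Multiset.map a Finset.univ.val = {1,1,1,1,1,3} ∧ paGenus e a = 0) ∨
     (e = 4 ∧ Multiset.map a Finset.univ.val = {1,1,1,1,2,2} ∧ paGenus e a = 1) ∨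
     (e = 5 ∧ Multiset.map a Finset.univ.val = {1,1,2,2,2,3} ∧ paGenus e a = 0) ∨
     (e = 5 ∧ Multiset.map a Finset.univ.val = {1,2,2,2,2,2} ∧ paGenus e a = 1) ∨
     (e = 6 ∧ Multiset.map a Finset.univ.val = {2,2,2,2,3,3} ∧ paGenus e a = 0)) := by
  have h := quartic_class_classification_general e (Finset.univ.val.map fun i => (a i : ℤ)) rfl
    (show (3 * e : ℤ) = 4 + ∑ i, (a i : ℤ) from mod_cast hsum)
    (paGenus_eq_classGenus e a ▸ hp)
  simp only [map_eq_iff_map_natCast_eq, paGenus_eq_classGenus]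
  exact ⟨by omega, by omega, by exact_mod_cast h⟩
end

section
/- The number of pairs (e, (a₁, …, a₆)) with e ∈ ℕ and (a₁, …, a₆) an ordered 6-tuple of natural numbers satisfying aᵢ ≤ 4 for all i, 3e = 4 + (a₁ + ⋯ + a₆), and p(e, a) = 0 is exactly 216; the number of such pairs with p(e, a) = 1 instead is exactly 27. -/
/-!
For a class of degree `d`, that is, with `3e = d + Σ aᵢ`, adjunction turns the genus condition
`p(e, a) = k` into `Σ aᵢ² = e² + 2 - d - 2k`. Cauchy–Schwarz, in the role of the Hodge index
theorem, then bounds `e` and every `aᵢ`: for `d = 4` and `k ≥ 0` one gets `e ≤ 6` and `aᵢ ≤ 3`. Up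
to permuting the `aᵢ` this leaves six classes of genus `0`, three of genus `1` and none of higher
genus. Each of them contributes the number of arrangements of its multiset of `aᵢ`, giving
`15 + 60 + 60 + 6 + 60 + 15 = 216` and `6 + 15 + 6 = 27`.
-/

theorem sum_count_nsmul_singleton {ι : Type*} [DecidableEq ι] {s : Multiset ι} {t : Finset ι}
    (hst : ∀ i ∈ s, i ∈ t) : ∑ i ∈ t, s.count i • ({i} : Multiset ι) = s := by
  rw [← Finset.sum_subset (fun i hi => hst i (Multiset.mem_toFinset.mp hi)) fun i _ hi => by
    rw [Multiset.count_eq_zero_of_notMem (mt Multiset.mem_toFinset.mpr hi), zero_nsmul]]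
  exact s.toFinset_sum_count_nsmul_eq

section Arrangements

open MulAction

variable {α ι : Type*} [Fintype α]

theorem exists_univ_val_map_eq {s : Multiset ι} (hs : s.card = Fintype.card α) :
    ∃ f : α → ι, Finset.univ.val.map f = s := by
  induction s using Quotient.inductionOn with | _ l
  let e : α ≃ Fin l.length := Fintype.equivFinOfCardEq hs.symm
  refine ⟨l.get ∘ e, ?_⟩
  rw [← Multiset.map_map, Multiset.map_univ_val_equiv]
  simp

theorem exists_comp_perm_eq_iff_univ_val_map_eq {f g : α → ι} :
    (∃ σ : Equiv.Perm α, f ∘ σ = g) ↔ Finset.univ.val.map g = Finset.univ.val.map f := by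
  classical
  constructor
  · rintro ⟨σ, rfl⟩
    rw [← Multiset.map_map, Multiset.map_univ_val_equiv]
  · intro h
    have card_fiber (i : ι) : Fintype.card {a // g a = i} = Fintype.card {a // f a = i} := by
      simpa [Multiset.count_map, Fintype.card_subtype, eq_comm, Finset.card_def] using
        congr(Multiset.count i $h)
    exact ⟨Equiv.ofFiberEquiv fun i => Fintype.equivOfCardEq (card_fiber i),
      funext (Equiv.ofFiberEquiv_map _)⟩

theorem countPerms_mul_prod_factorial [DecidableEq ι] (s : Multiset ι) :
    s.countPerms * ∏ i ∈ s.toFinset, (s.count i).factorial = s.card.factorial := by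
  rw [mul_comm, ← Multiset.toFinset_sum_count_eq]
  exact Nat.multinomial_spec s.toFinset s.count

theorem orbit_domMulAct_perm_eq (f : α → ι) :
    orbit (Equiv.Perm α)ᵈᵐᵃ f = {g | Finset.univ.val.map g = Finset.univ.val.map f} := by
  ext g
  rw [Set.mem_ofPred_eq, ← exists_comp_perm_eq_iff_univ_val_map_eq, mem_orbit_iff,
    DomMulAct.mk.surjective.exists]
  rfl

theorem card_stabilizer_domMulAct_perm [DecidableEq ι] (f : α → ι) :
    Nat.card (stabilizer (Equiv.Perm α)ᵈᵐᵃ f) =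
      ∏ i ∈ (Finset.univ.val.map f).toFinset, ((Finset.univ.val.map f).count i).factorial := by
  classical
  trans Nat.card {σ : Equiv.Perm α // f ∘ σ = f}
  · exact (Nat.card_congr (DomMulAct.mk.subtypeEquiv fun _ => Iff.rfl)).symm
  · rw [Nat.card_eq_fintype_card, DomMulAct.stabilizer_card']
    simp [Multiset.count_map, Fintype.card_subtype, eq_comm, Finset.card_def, Finset.image]

theorem encard_setOf_univ_val_map_eq [DecidableEq ι] {s : Multiset ι}
    (hs : s.card = Fintype.card α) :
    {f : α → ι | Finset.univ.val.map f = s}.encard = s.countPerms := by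
  classical
  obtain ⟨f, rfl⟩ := exists_univ_val_map_eq hs
  have finite_orbit : (orbit (Equiv.Perm α)ᵈᵐᵃ f).Finite :=
    have := Finite.of_equiv _ (DomMulAct.mk (M := Equiv.Perm α))
    Set.finite_range _
  rw [← orbit_domMulAct_perm_eq f, ← finite_orbit.cast_ncard_eq, Nat.cast_inj]
  have orbit_stabilizer := Nat.card_congr (orbitProdStabilizerEquivGroup (Equiv.Perm α)ᵈᵐᵃ f)
  rw [Nat.card_prod, Nat.card_congr DomMulAct.mk.symm, Nat.card_perm,
    Nat.card_eq_fintype_card (α := α), ← hs, ← countPerms_mul_prod_factorial,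
    card_stabilizer_domMulAct_perm] at orbit_stabilizer
  exact Nat.eq_of_mul_eq_mul_right (Finset.prod_pos fun _ _ => Nat.factorial_pos _)
    orbit_stabilizer

theorem encard_setOf_prod_univ_val_map_mem {κ : Type*} [DecidableEq ι] {T : Finset (κ × Multiset ι)}
    (hT : ∀ t ∈ T, t.2.card = Fintype.card α) :
    {x : κ × (α → ι) | (x.1, Finset.univ.val.map x.2) ∈ T}.encard =
      ∑ t ∈ T, t.2.countPerms := by
  have fibers : {x : κ × (α → ι) | (x.1, Finset.univ.val.map x.2) ∈ T} =
      ⋃ t ∈ (T : Set (κ × Multiset ι)), {t.1} ×ˢ {f : α → ι | Finset.univ.val.map f = t.2} := by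
    ext ⟨k, f⟩
    simp [eq_comm]
  have disjoint_fibers : (T : Set (κ × Multiset ι)).PairwiseDisjoint
      fun t => ({t.1} : Set κ) ×ˢ {f : α → ι | Finset.univ.val.map f = t.2} := by
    intro t _ u _ htu
    rw [Function.onFun, Set.disjoint_left]
    rintro ⟨k, f⟩ ⟨hk, hf⟩ ⟨hk', hf'⟩
    exact htu (Prod.ext (hk.symm.trans hk') (hf.symm.trans hf'))
  rw [fibers, T.finite_toSet.encard_biUnion disjoint_fibers, finsum_mem_coe_finset, Nat.cast_sum]
  refine Finset.sum_congr rfl fun t ht => ?_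
  rw [Set.encard_prod, Set.encard_singleton, one_mul, encard_setOf_univ_val_map_eq (hT t ht)]

end Arrangements

theorem two_mul_paGenus (e : ℕ) (a : Fin 6 → ℕ) :
    2 * paGenus e a = ((e : ℤ) - 1) * (e - 2) - ∑ i, (a i : ℤ) * (a i - 1) := by
  have two_mul_half (z : ℤ) : 2 * (z * (z - 1) / 2) = z * (z - 1) :=
    Int.mul_ediv_cancel' (Int.even_mul_pred_self z).two_dvd
  have plane_term := two_mul_half (e - 1)
  rw [sub_sub, one_add_one_eq_two] at plane_term
  simp only [paGenus, mul_sub (2 : ℤ), Finset.mul_sum, two_mul_half, plane_term]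

section Degree

variable {d e : ℕ} {a : Fin 6 → ℕ}

theorem sum_sq_eq_of_degree (h : 3 * e = d + ∑ i, a i) :
    ∑ i, (a i : ℤ) ^ 2 = e ^ 2 + 2 - d - 2 * paGenus e a := by
  have genus := two_mul_paGenus e a
  simp only [mul_sub_one, Finset.sum_sub_distrib, ← sq] at genus
  zify at h
  linarith

theorem paGenus_eq_iff_of_degree (h : 3 * e = d + ∑ i, a i) {k : ℕ} :
    paGenus e a = k ↔ ∑ i, a i ^ 2 + d + 2 * k = e ^ 2 + 2 := by
  have sum_sq := sum_sq_eq_of_degree h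
  zify
  constructor <;> intro <;> linarith

theorem three_mul_sub_sq_le_of_degree (h : 3 * e = d + ∑ i, a i) :
    3 * ((e : ℤ) - d) ^ 2 ≤ 2 * (d ^ 2 - 3 * d + 6 - 6 * paGenus e a) := by
  have degree : (3 * e : ℤ) = d + ∑ i, (a i : ℤ) := mod_cast h
  have cauchy_schwarz : (∑ i, (a i : ℤ)) ^ 2 ≤ 6 * ∑ i, (a i : ℤ) ^ 2 := by
    simpa using sq_sum_le_card_mul_sum_sq (s := Finset.univ) (f := fun i => (a i : ℤ))
  rw [sum_sq_eq_of_degree h, ← sub_eq_of_eq_add' degree] at cauchy_schwarz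
  linarith

theorem le_sub_mul_add_three_mul_of_degree (h : 3 * e = d + ∑ i, a i) (i : Fin 6) :
    4 * ((d : ℤ) - 2) + 8 * paGenus e a ≤ (d - a i) * (d + 3 * a i) := by
  have degree : (3 * e : ℤ) = d + ∑ j, (a j : ℤ) := mod_cast h
  have cauchy_schwarz : (∑ j ∈ Finset.univ.erase i, (a j : ℤ)) ^ 2 ≤
      5 * ∑ j ∈ Finset.univ.erase i, (a j : ℤ) ^ 2 := by
    simpa using sq_sum_le_card_mul_sum_sq (s := Finset.univ.erase i) (f := fun j => (a j : ℤ))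
  rw [Finset.sum_erase_eq_sub (Finset.mem_univ i), Finset.sum_erase_eq_sub (Finset.mem_univ i),
    sum_sq_eq_of_degree h, ← sub_eq_of_eq_add' degree] at cauchy_schwarz
  -- Completing the square in `e` leaves the square of `4 * e - 3 * (d + a i)`.
  linarith [sq_nonneg (4 * (e : ℤ) - 3 * (d + a i))]

end Degree

/-- The solutions `(e, n₀, n₁, n₂, n₃)` of the numerical conditions on a quartic class of genus `k`,
where `nⱼ` is the number of indices `i` with `aᵢ = j`. -/
def quarticMultiplicities : ℕ → Finset (ℕ × ℕ × ℕ × ℕ × ℕ)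
  | 0 => {(2, 4, 2, 0, 0), (3, 2, 3, 1, 0), (4, 1, 2, 3, 0), (4, 0, 5, 0, 1), (5, 0, 2, 3, 1),
      (6, 0, 0, 4, 2)}
  | 1 => {(3, 1, 5, 0, 0), (4, 0, 4, 2, 0), (5, 0, 1, 5, 0)}
  | _ => ∅

/-- The pairs `(e, {a₁, …, a₆})` arising from quartic classes of genus `k`, with the `aᵢ` recorded
as a multiset, that is, up to permuting the six points. -/
def quarticTypes (k : ℕ) : Finset (ℕ × Multiset ℕ) :=
  (quarticMultiplicities k).image fun (e, n₀, n₁, n₂, n₃) =>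
    (e, n₀ • {0} + n₁ • {1} + n₂ • {2} + n₃ • {3})

theorem mem_quarticMultiplicities {k e n₀ n₁ n₂ n₃ : ℕ} (he : e ≤ 6)
    (card : n₀ + n₁ + n₂ + n₃ = 6) (degree : 3 * e = 4 + (n₁ + n₂ * 2 + n₃ * 3))
    (sum_sq : n₁ + n₂ * 4 + n₃ * 9 + 4 + 2 * k = e ^ 2 + 2) :
    (e, n₀, n₁, n₂, n₃) ∈ quarticMultiplicities k := by
  have k_le_one : k ≤ 1 := by interval_cases e <;> omega
  have n₃_le_three : n₃ ≤ 3 := by interval_cases e <;> omega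
  -- Subtracting `degree` from `sum_sq` gives `2 * n₂ + 6 * n₃`, so `n₃` fixes `n₂`, `n₁`, `n₀`.
  interval_cases e <;> interval_cases k <;> interval_cases n₃ <;> try omega
  all_goals
    simp only [quarticMultiplicities, Finset.mem_insert, Finset.mem_singleton, Prod.mk.injEq]
    lia

theorem mem_quarticTypes {k e : ℕ} {s : Multiset ℕ} (he : e ≤ 6) (le_three : ∀ m ∈ s, m ≤ 3)
    (card : s.card = 6) (degree : 3 * e = 4 + s.sum)
    (sum_sq : (s.map (· ^ 2)).sum + 4 + 2 * k = e ^ 2 + 2) :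
    (e, s) ∈ quarticTypes k := by
  have hs : ∑ m ∈ Finset.range 4, s.count m • {m} = s :=
    sum_count_nsmul_singleton fun m hm => Finset.mem_range_succ_iff.mpr (le_three m hm)
  simp only [Finset.sum_range_succ, Finset.range_zero, Finset.sum_empty, zero_add] at hs
  generalize s.count 0 = n₀, s.count 1 = n₁, s.count 2 = n₂, s.count 3 = n₃ at hs
  subst hs
  simp only [Multiset.nsmul_singleton, Multiset.card_add, Multiset.card_replicate,
    Multiset.sum_add, Multiset.sum_replicate, Multiset.map_add, Multiset.map_replicate,
    smul_eq_mul] at card degree sum_sq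
  exact Finset.mem_image_of_mem _
    (mem_quarticMultiplicities he card (by linarith) (by linarith))

theorem quarticTypes_spec {k : ℕ} : ∀ t ∈ quarticTypes k,
    t.2.card = 6 ∧ 3 * t.1 = 4 + t.2.sum ∧
      (t.2.map (· ^ 2)).sum + 4 + 2 * k = t.1 ^ 2 + 2 :=
  match k with
  | 0 | 1 => by decide
  | _ + 2 => by simp [quarticTypes, quarticMultiplicities]

theorem sum_countPerms_quarticTypes (k : ℕ) :
    ∑ t ∈ quarticTypes k, t.2.countPerms = if k = 0 then 216 else if k = 1 then 27 else 0 :=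
  match k with
  | 0 => show 15 + (60 + (60 + (6 + (60 + 15)))) = 216 from rfl
  | 1 => show 6 + (15 + 6) = 27 from rfl
  | _ + 2 => by simp [quarticTypes, quarticMultiplicities]

section Quartic

variable {e : ℕ} {a : Fin 6 → ℕ}

theorem le_six_of_quartic (h : 3 * e = 4 + ∑ i, a i) (genus_nonneg : 0 ≤ paGenus e a) : e ≤ 6 := by
  have bound := three_mul_sub_sq_le_of_degree h
  push_cast at bound
  by_contra! he
  nlinarith

theorem le_three_of_quartic (h : 3 * e = 4 + ∑ i, a i) (genus_nonneg : 0 ≤ paGenus e a)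
    (i : Fin 6) : a i ≤ 3 := by
  have bound := le_sub_mul_add_three_mul_of_degree h i
  push_cast at bound
  by_contra! ha
  nlinarith

theorem quartic_genus_eq_iff {k : ℕ} :
    3 * e = 4 + ∑ i, a i ∧ paGenus e a = k ↔ (e, Finset.univ.val.map a) ∈ quarticTypes k := by
  have sum_sq : ((Finset.univ.val.map a).map (· ^ 2)).sum = ∑ i, a i ^ 2 :=
    congrArg Multiset.sum (Multiset.map_map ..)
  constructor
  · rintro ⟨degree, genus⟩
    have genus_nonneg : 0 ≤ paGenus e a := genus ▸ Int.natCast_nonneg k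
    have le_three : ∀ m ∈ Finset.univ.val.map a, m ≤ 3 :=
      Multiset.forall_mem_map_iff.mpr fun i _ => le_three_of_quartic degree genus_nonneg i
    exact mem_quarticTypes (le_six_of_quartic degree genus_nonneg) le_three (by simp) degree
      (sum_sq ▸ (paGenus_eq_iff_of_degree degree).mp genus)
  · intro h
    obtain ⟨-, degree, types_sum_sq⟩ := quarticTypes_spec _ h
    exact ⟨degree, (paGenus_eq_iff_of_degree degree).mpr (sum_sq ▸ types_sum_sq)⟩

theorem quartic_le_four_and_iff {k : ℕ} :
    ((∀ i, a i ≤ 4) ∧ 3 * e = 4 + ∑ i, a i ∧ paGenus e a = k) ↔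
      3 * e = 4 + ∑ i, a i ∧ paGenus e a = k :=
  and_iff_right_of_imp fun ⟨degree, genus⟩ i =>
    (le_three_of_quartic degree (genus ▸ Int.natCast_nonneg k) i).trans (Nat.le_succ 3)

end Quartic

theorem quartic_class_count_general (k : ℕ) :
    {x : ℕ × (Fin 6 → ℕ) | 3 * x.1 = 4 + ∑ i, x.2 i ∧ paGenus x.1 x.2 = k}.encard =
      if k = 0 then 216 else if k = 1 then 27 else 0 := by
  simp_rw [quartic_genus_eq_iff]
  rw [encard_setOf_prod_univ_val_map_mem fun t ht => by simp [quarticTypes_spec t ht],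
    sum_countPerms_quarticTypes]
  push_cast
  rfl

/-- There are exactly `216` pairs `(e, (a₁, …, a₆))` with ordered tuples satisfying
`aᵢ ≤ 4`, `3e = 4 + Σ aᵢ` and `p(e, a) = 0`, and exactly `27` such pairs with
`p(e, a) = 1`. -/
theorem quartic_class_count :
    {x : ℕ × (Fin 6 → ℕ) |
      (∀ i, x.2 i ≤ 4) ∧ 3 * x.1 = 4 + ∑ i, x.2 i ∧ paGenus x.1 x.2 = 0}.ncard = 216 ∧
    {x : ℕ × (Fin 6 → ℕ) |
      (∀ i, x.2 i ≤ 4) ∧ 3 * x.1 = 4 + ∑ i, x.2 i ∧ paGenus x.1 x.2 = 1}.ncard = 27 := by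
  have count (k : ℕ) :
      {x : ℕ × (Fin 6 → ℕ) |
        (∀ i, x.2 i ≤ 4) ∧ 3 * x.1 = 4 + ∑ i, x.2 i ∧ paGenus x.1 x.2 = k}.ncard =
      if k = 0 then 216 else if k = 1 then 27 else 0 := by
    simp only [quartic_le_four_and_iff, Set.ncard_def, quartic_class_count_general]
    split_ifs <;> rfl
  exact ⟨mod_cast count 0, mod_cast count 1⟩
end
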